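/- Let G be an n-vertex unicyclic graph with unique cycle C_l and branches T_1,…,T_l, and let x ∈ V(T_i), y ∈ V(T_j). Then d(x, v_i) ≤ d(y, v_j) if and only if CC(x) ≥ CC(y). -/

import Mathlib

open SimpleGraph Finset

attribute [local instance] Classical.propDecidable

variable {V : Type*}

/-- Degree of a vertex as a real number. -/
noncomputable def degR [Fintype V] (G : SimpleGraph V) (x : V) : ℝ :=
  ((Finset.univ.filter fun y => G.Adj x y).card : ℝ)

/-- Number of edges of a graph. -/
noncomputable def esize (G : SimpleGraph V) : ℕ := Nat.card G.edgeSet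

/-- Dirichlet energy of a potential. -/
noncomputable def energyFn [Fintype V] (G : SimpleGraph V) (φ : V → ℝ) : ℝ :=
  (1/2) * ∑ u, ∑ v, if G.Adj u v then (φ u - φ v)^2 else 0

/-- Effective resistance between two vertices (unit resistors on edges),
via the Dirichlet variational principle: the reciprocal of the minimal energy
of a potential with value 1 at `x` and 0 at `y`. -/
noncomputable def eres [Fintype V] (G : SimpleGraph V) (x y : V) : ℝ :=
  (sInf {e : ℝ | ∃ φ : V → ℝ, φ x = 1 ∧ φ y = 0 ∧ e = energyFn G φ})⁻¹

/-- The transition matrix of the simple random walk, killed at `y`. -/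
noncomputable def hitMat [Fintype V] (G : SimpleGraph V) (y : V) : Matrix V V ℝ :=
  Matrix.of fun u v => if v = y then 0 else if G.Adj u v then (degR G u)⁻¹ else 0

/-- Expected hitting time `H_{xy}` of the simple random walk from `x` to `y`,
expressed as the sum of the survival probabilities of the walk killed at `y`. -/
noncomputable def hitting [Fintype V] (G : SimpleGraph V) (x y : V) : ℝ :=
  if x = y then 0 else ∑' k : ℕ, ∑ z, (hitMat G y ^ k) x z

/-- Resistance-centrality `R(x)`. -/
noncomputable def Rres [Fintype V] (G : SimpleGraph V) (x : V) : ℝ := ∑ y, eres G x y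

/-- Weighted resistance-centrality `R^w(x)`. -/
noncomputable def Rw [Fintype V] (G : SimpleGraph V) (x : V) : ℝ :=
  ∑ y, degR G y * eres G x y

/-- Kirchhoff index `Kf(G)`. -/
noncomputable def Kf [Fintype V] (G : SimpleGraph V) : ℝ :=
  (1/2) * ∑ x, ∑ y, eres G x y

/-- Additive degree-Kirchhoff index `Kf⁺(G)`. -/
noncomputable def KfPlus [Fintype V] (G : SimpleGraph V) : ℝ :=
  (1/2) * ∑ x, ∑ y, (degR G x + degR G y) * eres G x y

/-- Multiplicative degree-Kirchhoff index `Kf*(G)`. -/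
noncomputable def KfStar [Fintype V] (G : SimpleGraph V) : ℝ :=
  (1/2) * ∑ x, ∑ y, degR G x * degR G y * eres G x y

/-- Cover cost `CC(x) = Σ_y H_{xy}`. -/
noncomputable def coverCost [Fintype V] (G : SimpleGraph V) (x : V) : ℝ :=
  ∑ y, hitting G x y

/-- Reverse cover cost `RC(x) = Σ_y H_{yx}`. -/
noncomputable def reverseCoverCost [Fintype V] (G : SimpleGraph V) (x : V) : ℝ :=
  ∑ y, hitting G y x

/-- Centrality (transmission) `D(x) = Σ_y d(x,y)`. -/
noncomputable def Dcent [Fintype V] (G : SimpleGraph V) (x : V) : ℝ :=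
  ∑ y, (G.dist x y : ℝ)

/-- Weighted centrality `D^w(x) = Σ_y deg(y)·d(x,y)`. -/
noncomputable def Dw [Fintype V] (G : SimpleGraph V) (x : V) : ℝ :=
  ∑ y, degR G y * (G.dist x y : ℝ)

/-- Wiener index `W(G)`. -/
noncomputable def Wiener [Fintype V] (G : SimpleGraph V) : ℝ :=
  (1/2) * ∑ x, ∑ y, (G.dist x y : ℝ)

/-- `D_{T}(v)`: sum of distances from `v` to the vertices of its connected
component in `G'` (used for the branch trees of a unicyclic graph). -/
noncomputable def branchD [Fintype V] (G' : SimpleGraph V) (v : V) : ℝ :=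
  ∑ u, if G'.Reachable v u then (G'.dist v u : ℝ) else 0

/-- The set of edges of the cycle `c 0 - c 1 - ⋯ - c (l-1) - c 0`. -/
def cycleEdges {l : ℕ} [NeZero l] (c : Fin l → V) : Set (Sym2 V) :=
  Set.range fun i : Fin l => s(c i, c (i + 1))

/-- Distance from a vertex to a set of vertices. -/
noncomputable def distToSet [Fintype V] (G : SimpleGraph V) (x : V) (s : Set V) : ℕ :=
  sInf {d | ∃ y ∈ s, G.dist x y = d}

/-- `v` is the center of a star. -/
def IsStarCenter (G : SimpleGraph V) (v : V) : Prop := ∀ u, u ≠ v → G.Adj v u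

/-- `G` is a star. -/
def IsStar (G : SimpleGraph V) : Prop := ∃ v, IsStarCenter G v

/-- The lollipop graph `P_n^l` : a cycle `C_l` on `0,…,l-1` together with a
path on `l,…,n-1` attached at the cycle vertex `0`. -/
def lollipop (n l : ℕ) : SimpleGraph (Fin n) :=
  SimpleGraph.fromRel (fun a b =>
    (a.val + 1 = b.val ∧ b.val < l) ∨ (a.val = 0 ∧ b.val = l - 1) ∨
    (a.val = 0 ∧ b.val = l) ∨ (l ≤ a.val ∧ a.val + 1 = b.val))

/-- The graph `S_n^l` : a cycle `C_l` on `0,…,l-1` with `n - l` pendant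
vertices `l,…,n-1` attached at the cycle vertex `0`. -/
def starCycle (n l : ℕ) : SimpleGraph (Fin n) :=
  SimpleGraph.fromRel (fun a b =>
    (a.val + 1 = b.val ∧ b.val < l) ∨ (a.val = 0 ∧ b.val = l - 1) ∨
    (a.val = 0 ∧ l ≤ b.val))

/-- The cycle graph `C_n` on `Fin n`. -/
def cycleG (n : ℕ) : SimpleGraph (Fin n) :=
  SimpleGraph.fromRel (fun a b => a.val + 1 = b.val ∨ (a.val = 0 ∧ b.val = n - 1))

/-!
Write `L` for the Laplacian of `G`, `m` for its number of edges and `h` for the distance to the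
cycle. Conditioning on the first step gives `L H(·, z) = deg` away from `z`, and since the entries
of a vector in the image of `L` sum to zero, summing over `z` yields `L CC = n • deg - 2m`.
Joining every vertex off the cycle to a neighbour nearer to it, and every cycle vertex to the next
one, lists `n` distinct edges, hence all edges of the unicyclic graph `G`. The weights
`1 + h x - h y` of the neighbours `y` of any vertex `x` therefore sum to `2`, that is,
`L h = 2 - deg`. As `m = n`, the function `CC + n h` is harmonic, hence constant, so `CC` decreases
strictly in `h`; and on the branch `T_i` the function `h` is the distance to `v_i`.
-/

open Matrix Function

lemma prop_of_reachable {G : SimpleGraph V} {P : V → Prop}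
    (hP : ∀ x y, G.Adj x y → P x → P y) {x y : V} (hxy : G.Reachable x y) (hx : P x) : P y := by
  obtain ⟨w⟩ := hxy
  induction w with
  | nil => exact hx
  | cons hadj _ ih => exact ih (hP _ _ hadj hx)

/-! ### Superharmonic functions on a finite graph -/

section Laplacian

variable [Fintype V] (G : SimpleGraph V)

lemma lapMatrix_mulVec_eq_sum_sub {R : Type*} [NonAssocRing R] (f : V → R) (x : V) :
    (G.lapMatrix R *ᵥ f) x = ∑ y ∈ G.neighborFinset x, (f x - f y) := by
  rw [lapMatrix_mulVec_apply, sum_sub_distrib, sum_const, card_neighborFinset_eq_degree,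
    nsmul_eq_mul]

lemma sum_lapMatrix_mulVec {R : Type*} [CommRing R] (f : V → R) :
    ∑ x, (G.lapMatrix R *ᵥ f) x = 0 := by
  have hone : (fun _ ↦ 1) ᵥ* G.lapMatrix R = 0 := by
    rw [← mulVec_transpose, (G.isSymm_lapMatrix (R := R)).eq, lapMatrix_mulVec_const_eq_zero]
  simpa [hone, dotProduct] using dotProduct_mulVec (fun _ ↦ 1) (G.lapMatrix R) f

variable {G}

lemma minimum_principle (hconn : G.Connected) {f : V → ℝ} {z : V}
    (hf : ∀ x, x ≠ z → 0 ≤ (G.lapMatrix ℝ *ᵥ f) x) (x : V) : f z ≤ f x := by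
  obtain ⟨x₀, -, hmin⟩ := exists_min_image univ f ⟨z, mem_univ z⟩
  by_contra! hlt
  have hx₀z : f x₀ < f z := (hmin x (mem_univ x)).trans_lt hlt
  refine hx₀z.ne' (prop_of_reachable (P := fun y ↦ f y = f x₀) ?_ (hconn x₀ z) rfl)
  intro a b hab ha
  have hnonpos : ∀ y ∈ G.neighborFinset a, f a - f y ≤ 0 := fun y _ ↦
    sub_nonpos.2 (ha.trans_le (hmin y (mem_univ y)))
  have hsum : ∑ y ∈ G.neighborFinset a, (f a - f y) = 0 := by
    refine le_antisymm (sum_nonpos hnonpos) ?_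
    rw [← lapMatrix_mulVec_eq_sum_sub]
    exact hf a (by rintro rfl; exact hx₀z.ne' ha)
  have hab' := (sum_eq_zero_iff_of_nonpos hnonpos).1 hsum b ((mem_neighborFinset G a b).2 hab)
  exact (sub_eq_zero.1 hab').symm.trans ha

end Laplacian

/-! ### Neumann series of a nonnegative matrix -/

section Neumann

variable [Fintype V] {R : Type*} [Semiring R] [PartialOrder R] [IsOrderedRing R]

lemma mulVec_mono_of_nonneg {ι : Type*} {A : Matrix ι V R} (hA : ∀ i j, 0 ≤ A i j) {v w : V → R}
    (hvw : v ≤ w) : A *ᵥ v ≤ A *ᵥ w :=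
  fun i ↦ sum_le_sum fun j _ ↦ mul_le_mul_of_nonneg_left (hvw j) (hA i j)

lemma pow_mulVec_nonneg {Q : Matrix V V R} (hQ : ∀ i j, 0 ≤ Q i j) {b : V → R} (hb : 0 ≤ b)
    (k : ℕ) : 0 ≤ Q ^ k *ᵥ b := by
  induction k with
  | zero => simpa using hb
  | succ k ih =>
    rw [pow_succ', ← mulVec_mulVec]
    simpa using mulVec_mono_of_nonneg hQ ih

variable {Q : Matrix V V ℝ}

lemma summable_pow_mulVec (hQ : ∀ i j, 0 ≤ Q i j) {b u : V → ℝ} (hb : 0 ≤ b) (hu : 0 ≤ u)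
    (hbu : b + Q *ᵥ u ≤ u) : Summable fun k : ℕ ↦ Q ^ k *ᵥ b := by
  have hpartial (N : ℕ) : ∑ k ∈ range N, Q ^ k *ᵥ b ≤ u := by
    induction N with
    | zero => simpa using hu
    | succ N ih =>
      calc ∑ k ∈ range (N + 1), Q ^ k *ᵥ b
          = b + Q *ᵥ ∑ k ∈ range N, Q ^ k *ᵥ b := by
            simp only [sum_range_succ', mulVec_sum, mulVec_mulVec, ← pow_succ', pow_zero,
              one_mulVec, add_comm]
        _ ≤ b + Q *ᵥ u := by gcongr; exact mulVec_mono_of_nonneg hQ ih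
        _ ≤ u := hbu
  refine Pi.summable.2 fun x ↦ summable_of_sum_range_le (c := u x)
    (fun k ↦ pow_mulVec_nonneg hQ hb k x) fun N ↦ ?_
  simpa only [Finset.sum_apply] using hpartial N x

lemma tsum_pow_mulVec {b : V → ℝ} (hsum : Summable fun k : ℕ ↦ Q ^ k *ᵥ b) :
    ∑' k : ℕ, Q ^ k *ᵥ b = b + Q *ᵥ ∑' k : ℕ, Q ^ k *ᵥ b := by
  have hcomm : Q *ᵥ ∑' k : ℕ, Q ^ k *ᵥ b = ∑' k : ℕ, Q *ᵥ (Q ^ k *ᵥ b) :=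
    hsum.map_tsum Q.mulVecLin (LinearMap.continuous_of_finiteDimensional _)
  rw [hcomm, hsum.tsum_eq_zero_add, pow_zero, one_mulVec]
  simp only [mulVec_mulVec, pow_succ']

end Neumann

/-! ### Hitting times and the cover cost -/

section Hitting

variable [Fintype V] (G : SimpleGraph V)

lemma degR_eq_degree (x : V) : degR G x = G.degree x := by
  rw [degR, ← card_neighborFinset_eq_degree, neighborFinset_eq_filter]

lemma hitMat_nonneg (z x y : V) : 0 ≤ hitMat G z x y := by
  rw [hitMat, of_apply, degR_eq_degree]
  positivity

lemma degree_mul_hitMat_mulVec (z : V) (v : V → ℝ) (x : V) :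
    G.degree x * (hitMat G z *ᵥ v) x = ∑ y ∈ G.neighborFinset x, update v z 0 y := by
  rw [mulVec, dotProduct, mul_sum, neighborFinset_eq_filter, sum_filter]
  refine sum_congr rfl fun y _ ↦ ?_
  by_cases hxy : G.Adj x y
  · have hdeg : (G.degree x : ℝ) ≠ 0 :=
      Nat.cast_ne_zero.2 ((G.degree_pos_iff_exists_adj x).2 ⟨y, hxy⟩).ne'
    by_cases hyz : y = z <;> simp [hitMat, degR_eq_degree, hxy, hyz, hdeg]
  · simp [hitMat, hxy]

lemma lapMatrix_mulVec_update {z x : V} (hxz : x ≠ z) (v : V → ℝ) :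
    (G.lapMatrix ℝ *ᵥ update v z 0) x = G.degree x * (v x - (hitMat G z *ᵥ v) x) := by
  rw [lapMatrix_mulVec_apply, update_of_ne hxz, mul_sub, degree_mul_hitMat_mulVec]

variable {G}

lemma nonneg_of_hitMat_mulVec_le (hconn : G.Connected) {z : V} {v : V → ℝ}
    (hv : hitMat G z *ᵥ v ≤ v) : 0 ≤ v := by
  have hupdate : 0 ≤ update v z 0 := fun x ↦ by
    simpa using minimum_principle hconn (f := update v z 0) (z := z) (fun y hyz ↦ by
      rw [lapMatrix_mulVec_update G hyz]
      exact mul_nonneg (Nat.cast_nonneg _) (sub_nonneg.2 (hv y))) x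
  have hoff (x : V) (hxz : x ≠ z) : 0 ≤ v x := by simpa [hxz] using hupdate x
  intro x
  by_cases hxz : x = z
  · refine le_trans (sum_nonneg fun y _ ↦ ?_) (hv x)
    by_cases hyz : y = z
    · simp [hitMat, hyz]
    · exact mul_nonneg (hitMat_nonneg G z x y) (hoff y hyz)
  · exact hoff x hxz

lemma exists_eq_add_hitMat_mulVec (hconn : G.Connected) (z : V) (b : V → ℝ) :
    ∃ u, u = b + hitMat G z *ᵥ u := by
  have hinj : Injective (1 - hitMat G z).mulVecLin := by
    refine (injective_iff_map_eq_zero _).2 fun v hv ↦ ?_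
    rw [mulVecLin_apply, sub_mulVec, one_mulVec, sub_eq_zero] at hv
    refine le_antisymm ?_ (nonneg_of_hitMat_mulVec_le hconn hv.ge)
    rw [← neg_nonneg]
    exact nonneg_of_hitMat_mulVec_le hconn (z := z) (by rw [mulVec_neg, ← hv])
  obtain ⟨u, hu⟩ := LinearMap.injective_iff_surjective.1 hinj b
  rw [mulVecLin_apply, sub_mulVec, one_mulVec] at hu
  exact ⟨u, sub_eq_iff_eq_add.1 hu⟩

lemma summable_hitMat_pow_mulVec (hconn : G.Connected) (z : V) {b : V → ℝ} (hb : 0 ≤ b) :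
    Summable fun k : ℕ ↦ hitMat G z ^ k *ᵥ b := by
  obtain ⟨u, hu⟩ := exists_eq_add_hitMat_mulVec hconn z b
  have hu_nonneg : 0 ≤ u := nonneg_of_hitMat_mulVec_le hconn (z := z) <| by
    conv_rhs => rw [hu]
    exact le_add_of_nonneg_left hb
  exact summable_pow_mulVec (hitMat_nonneg G z) hb hu_nonneg hu.ge

lemma hitting_eq_update_tsum (hconn : G.Connected) (z : V) :
    (hitting G · z) = update (∑' k : ℕ, hitMat G z ^ k *ᵥ 1) z 0 := by
  funext x
  by_cases hxz : x = z
  · simp [hitting, hxz]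
  · rw [update_of_ne hxz, hitting, if_neg hxz,
      tsum_apply (summable_hitMat_pow_mulVec hconn z zero_le_one)]
    simp only [mulVec, dotProduct, Pi.one_apply, mul_one]

lemma lapMatrix_mulVec_hitting_of_ne (hconn : G.Connected) {x z : V} (hxz : x ≠ z) :
    (G.lapMatrix ℝ *ᵥ (hitting G · z)) x = G.degree x := by
  have hstep := congrFun (tsum_pow_mulVec (summable_hitMat_pow_mulVec hconn z zero_le_one)) x
  rw [Pi.add_apply, Pi.one_apply, ← sub_eq_iff_eq_add] at hstep
  rw [hitting_eq_update_tsum hconn, lapMatrix_mulVec_update G hxz, hstep, mul_one]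

lemma sum_degree_eq_two_mul_esize (G : SimpleGraph V) : ∑ x, (G.degree x : ℝ) = 2 * esize G := by
  rw [← Nat.cast_sum, sum_degrees_eq_twice_card_edges, esize, Nat.card_eq_card_toFinset]
  push_cast
  rfl

lemma lapMatrix_mulVec_hitting (hconn : G.Connected) (x z : V) :
    (G.lapMatrix ℝ *ᵥ (hitting G · z)) x
      = G.degree x - if x = z then 2 * (esize G : ℝ) else 0 := by
  by_cases hxz : x = z
  · subst hxz
    have hsum := sum_lapMatrix_mulVec G (hitting G · x)
    rw [← add_sum_erase univ _ (mem_univ x), sum_congr rfl fun y hy ↦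
      lapMatrix_mulVec_hitting_of_ne hconn (ne_of_mem_erase hy)] at hsum
    have hdeg := add_sum_erase univ (fun y ↦ (G.degree y : ℝ)) (mem_univ x)
    rw [sum_degree_eq_two_mul_esize] at hdeg
    rw [if_pos rfl]
    linarith
  · rw [if_neg hxz, sub_zero, lapMatrix_mulVec_hitting_of_ne hconn hxz]

theorem lapMatrix_mulVec_coverCost (hconn : G.Connected) (x : V) :
    (G.lapMatrix ℝ *ᵥ coverCost G) x = Fintype.card V * G.degree x - 2 * esize G := by
  have hcover : coverCost G = ∑ z, (hitting G · z) := by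
    funext y
    simp only [coverCost, Finset.sum_apply]
  rw [hcover, mulVec_sum, Finset.sum_apply]
  simp only [lapMatrix_mulVec_hitting hconn, sum_sub_distrib, sum_const, sum_ite_eq, mem_univ,
    if_true, card_univ, nsmul_eq_mul]

end Hitting

/-! ### Graphs generated by a self-map -/

section FunctionalGraph

/-- The edges of `G` are the pairs `{x, σ x}`, and distinct `x` give distinct edges: `G` is the
underlying undirected graph of the functional digraph of `σ`, without loops or 2-cycles. -/
structure IsFunctionalGraph (G : SimpleGraph V) (σ : V → V) : Prop where
  adj_iff : ∀ x y, G.Adj x y ↔ σ x = y ∨ σ y = x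
  apply_apply_ne : ∀ x, σ (σ x) ≠ x

lemma isFunctionalGraph_of_esize_eq [Fintype V] {G : SimpleGraph V} {σ : V → V}
    (hadj : ∀ x, G.Adj x (σ x)) (hσ : ∀ x, σ (σ x) ≠ x) (hcard : esize G = Fintype.card V) :
    IsFunctionalGraph G σ := by
  let edge (x : V) : G.edgeSet := ⟨s(x, σ x), hadj x⟩
  have hinj : Injective edge := by
    intro x y hxy
    rcases Sym2.eq_iff.1 (congrArg Subtype.val hxy) with ⟨h, -⟩ | ⟨hx, hy⟩
    · exact h
    · exact absurd (by rw [hy, hx]) (hσ x)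
  have hsurj : Surjective edge := (hinj.bijective_of_nat_card_le <| by
    rw [← Nat.card_eq_fintype_card] at hcard
    exact hcard.le).2
  refine ⟨fun x y ↦ ⟨fun hxy ↦ ?_, ?_⟩, hσ⟩
  · obtain ⟨a, ha⟩ := hsurj ⟨s(x, y), hxy⟩
    rcases Sym2.eq_iff.1 (congrArg Subtype.val ha) with ⟨rfl, h⟩ | ⟨rfl, h⟩
    · exact .inl h
    · exact .inr h
  · rintro (rfl | rfl)
    · exact hadj x
    · exact (hadj y).symm

lemma IsFunctionalGraph.sum_neighborFinset [Fintype V] {G : SimpleGraph V} {σ : V → V}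
    (hG : IsFunctionalGraph G σ) {M : Type*} [AddCommMonoid M] (f : V → M) (x : V) :
    ∑ y ∈ G.neighborFinset x, f y = f (σ x) + ∑ y with σ y = x, f y := by
  have hcons : G.neighborFinset x = cons (σ x) ({y | σ y = x} : Finset V)
      (by simpa using hG.apply_apply_ne x) := by
    ext y
    simp [hG.adj_iff, eq_comm]
  rw [hcons, sum_cons]

lemma dist_iterate_le {G : SimpleGraph V} {σ : V → V} (hadj : ∀ x, G.Adj x (σ x)) (k : ℕ) (x : V) :
    G.dist x (σ^[k] x) ≤ k := by
  induction k generalizing x with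
  | zero => simp
  | succ k ih =>
    calc G.dist x (σ^[k + 1] x)
        ≤ G.dist x (σ x) + G.dist (σ x) (σ^[k] (σ x)) := (hadj x).reachable.dist_triangle_left _
      _ ≤ 1 + k := add_le_add (dist_eq_one_iff_adj.2 (hadj x)).le (ih (σ x))
      _ = k + 1 := add_comm _ _

end FunctionalGraph

/-! ### Distance to a set -/

section DistToSet

variable [Fintype V] {G : SimpleGraph V} {s : Set V} {x y : V}

lemma distToSet_le_dist (hy : y ∈ s) : distToSet G x s ≤ G.dist x y :=
  Nat.sInf_le ⟨y, hy, rfl⟩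

lemma exists_dist_eq_distToSet (hs : s.Nonempty) (x : V) :
    ∃ y ∈ s, G.dist x y = distToSet G x s := by
  obtain ⟨y, hy⟩ := hs
  exact Nat.sInf_mem (s := {d | ∃ y ∈ s, G.dist x y = d}) ⟨_, y, hy, rfl⟩

lemma distToSet_eq_zero (hx : x ∈ s) : distToSet G x s = 0 :=
  Nat.le_zero.1 ((distToSet_le_dist hx).trans_eq dist_self)

lemma exists_adj_distToSet_add_one (hconn : G.Connected) (hs : s.Nonempty) (hx : x ∉ s) :
    ∃ y, G.Adj x y ∧ distToSet G y s + 1 = distToSet G x s := by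
  obtain ⟨a, ha, hxa⟩ := exists_dist_eq_distToSet (G := G) hs x
  obtain ⟨w, hw⟩ := hconn.exists_walk_length_eq_dist x a
  cases w with
  | nil => exact absurd ha hx
  | @cons _ y _ hxy w =>
    obtain ⟨b, hb, hyb⟩ := exists_dist_eq_distToSet (G := G) hs y
    have hya : distToSet G y s ≤ w.length := (distToSet_le_dist ha).trans (dist_le w)
    have hxb : distToSet G x s ≤ 1 + G.dist y b :=
      (distToSet_le_dist hb).trans <| (hxy.reachable.dist_triangle_left b).trans_eq <| by
        rw [dist_eq_one_iff_adj.2 hxy]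
    rw [Walk.length_cons] at hw
    exact ⟨y, hxy, by omega⟩

end DistToSet

/-! ### Unicyclic graphs -/

/-- `σ` advances along the closed walk `c` by one step and moves every other vertex to a neighbour
one step nearer to `c`. It lists the edges of a unicyclic graph with cycle `c` as the pairs
`{x, σ x}`, one for each vertex. -/
structure IsCycleSucc [Fintype V] (G : SimpleGraph V) {l : ℕ} [NeZero l] (c : Fin l → V)
    (σ : V → V) : Prop where
  adj : ∀ x, G.Adj x (σ x)
  apply_cycle : ∀ i, σ (c i) = c (i + 1)
  distToSet_add_one : ∀ x, x ∉ Set.range c →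
    distToSet G (σ x) (Set.range c) + 1 = distToSet G x (Set.range c)

lemma exists_isCycleSucc [Fintype V] {G : SimpleGraph V} {l : ℕ} [NeZero l] {c : Fin l → V}
    (hconn : G.Connected) (hinj : Injective c) (hadj : ∀ i, G.Adj (c i) (c (i + 1))) :
    ∃ σ, IsCycleSucc G c σ := by
  choose! p hp using fun (x : V) (hx : x ∉ Set.range c) ↦
    exists_adj_distToSet_add_one hconn (Set.range_nonempty c) hx
  refine ⟨extend c (fun i ↦ c (i + 1)) p, fun x ↦ ?_, hinj.extend_apply _ _, fun x hx ↦ ?_⟩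
  · by_cases hx : x ∈ Set.range c
    · obtain ⟨i, rfl⟩ := hx
      rw [hinj.extend_apply]
      exact hadj i
    · rw [extend_apply' _ _ _ hx]
      exact (hp x hx).1
  · rw [extend_apply' _ _ _ hx]
    exact (hp x hx).2

namespace IsCycleSucc

variable [Fintype V] {G : SimpleGraph V} {l : ℕ} [NeZero l] {c : Fin l → V} {σ : V → V}

lemma apply_apply_ne (hσ : IsCycleSucc G c σ) (hl : 3 ≤ l) (hinj : Injective c) (x : V) :
    σ (σ x) ≠ x := by
  intro h
  by_cases hx : x ∈ Set.range c
  · obtain ⟨i, rfl⟩ := hx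
    rw [hσ.apply_cycle, hσ.apply_cycle] at h
    have htwo : (1 + 1 : Fin l) = 0 := by simpa [add_assoc] using hinj h
    have hval := congrArg Fin.val htwo
    rw [Fin.val_add, Fin.val_one', Nat.mod_eq_of_lt (by omega : 1 < l),
      Nat.mod_eq_of_lt (by omega : 1 + 1 < l)] at hval
    simp at hval
  · have hx₁ := hσ.distToSet_add_one x hx
    by_cases hσx : σ x ∈ Set.range c
    · obtain ⟨i, hi⟩ := hσx
      exact hx ⟨i + 1, by rw [← hσ.apply_cycle, hi, h]⟩
    · have hx₂ := hσ.distToSet_add_one (σ x) hσx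
      rw [h] at hx₂
      omega

lemma isFunctionalGraph (hσ : IsCycleSucc G c σ) (hl : 3 ≤ l) (hinj : Injective c)
    (hcard : esize G = Fintype.card V) : IsFunctionalGraph G σ :=
  isFunctionalGraph_of_esize_eq hσ.adj (hσ.apply_apply_ne hl hinj) hcard

lemma distToSet_sub_distToSet_apply (hσ : IsCycleSucc G c σ) (x : V) :
    (distToSet G x (Set.range c) : ℝ) - distToSet G (σ x) (Set.range c)
      = if x ∈ Set.range c then 0 else 1 := by
  split_ifs with hx
  · obtain ⟨i, rfl⟩ := hx
    rw [hσ.apply_cycle, distToSet_eq_zero (Set.mem_range_self i),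
      distToSet_eq_zero (Set.mem_range_self (i + 1)), sub_self]
  · rw [← hσ.distToSet_add_one x hx]
    push_cast
    ring

lemma sum_fiber_indicator_range (hσ : IsCycleSucc G c σ) (hinj : Injective c) (x : V) :
    (∑ y with σ y = x, if y ∈ Set.range c then (1 : ℝ) else 0)
      = if x ∈ Set.range c then 1 else 0 := by
  split_ifs with hx
  · obtain ⟨i, rfl⟩ := hx
    have hpred : σ (c (i - 1)) = c i := by rw [hσ.apply_cycle, sub_add_cancel]
    rw [sum_eq_single_of_mem (c (i - 1)) (by simpa using hpred), if_pos (Set.mem_range_self _)]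
    rintro y hy hne
    refine if_neg ?_
    rintro ⟨j, rfl⟩
    rw [mem_filter_univ, hσ.apply_cycle] at hy
    exact hne (by rw [← hinj hy, add_sub_cancel_right])
  · refine sum_eq_zero fun y hy ↦ if_neg ?_
    rintro ⟨j, rfl⟩
    rw [mem_filter_univ, hσ.apply_cycle] at hy
    exact hx ⟨j + 1, hy⟩

lemma lapMatrix_mulVec_distToSet (hσ : IsCycleSucc G c σ) (hG : IsFunctionalGraph G σ)
    (hinj : Injective c) (x : V) :
    (G.lapMatrix ℝ *ᵥ fun y ↦ (distToSet G y (Set.range c) : ℝ)) x = 2 - G.degree x := by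
  set h : V → ℝ := fun y ↦ distToSet G y (Set.range c)
  have hdrop (y : V) : h y - h (σ y) = if y ∈ Set.range c then 0 else 1 :=
    hσ.distToSet_sub_distToSet_apply y
  have hfiber : ∀ y ∈ ({y | σ y = x} : Finset V),
      h x - h y + 1 = if y ∈ Set.range c then 1 else 0 := by
    intro y hy
    rw [mem_filter_univ] at hy
    rw [← hy, ← neg_sub, hdrop]
    split_ifs <;> norm_num
  have htwo : ∑ y ∈ G.neighborFinset x, (h x - h y + 1) = 2 := by
    rw [hG.sum_neighborFinset, hdrop, sum_congr rfl hfiber, hσ.sum_fiber_indicator_range hinj]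
    split_ifs <;> norm_num
  rw [sum_add_distrib, ← lapMatrix_mulVec_eq_sum_sub, sum_const, card_neighborFinset_eq_degree,
    nsmul_one] at htwo
  exact eq_sub_of_add_eq htwo

lemma iterate_distToSet_apply (hσ : IsCycleSucc G c σ) {x : V} (hx : s(x, σ x) ∉ cycleEdges c) :
    σ^[distToSet G (σ x) (Set.range c)] (σ x) = σ^[distToSet G x (Set.range c)] x := by
  have hxc : x ∉ Set.range c := by
    rintro ⟨i, rfl⟩
    exact hx ⟨i, by rw [hσ.apply_cycle]⟩
  rw [← hσ.distToSet_add_one x hxc, iterate_succ_apply]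

lemma iterate_distToSet_eq_of_reachable (hσ : IsCycleSucc G c σ) (hG : IsFunctionalGraph G σ)
    {x y : V} (hxy : (G.deleteEdges (cycleEdges c)).Reachable x y) :
    σ^[distToSet G x (Set.range c)] x = σ^[distToSet G y (Set.range c)] y := by
  refine prop_of_reachable (P := fun z ↦ σ^[distToSet G x (Set.range c)] x
    = σ^[distToSet G z (Set.range c)] z) (fun a b hab ha ↦ ha.trans ?_) hxy rfl
  rw [deleteEdges_adj, hG.adj_iff] at hab
  obtain ⟨rfl | rfl, hnot⟩ := hab
  · exact (hσ.iterate_distToSet_apply hnot).symm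
  · exact hσ.iterate_distToSet_apply (Sym2.eq_swap ▸ hnot)

end IsCycleSucc

section Unicyclic

variable [Fintype V] {G : SimpleGraph V} {l : ℕ} [NeZero l] {c : Fin l → V}

theorem dist_eq_distToSet_of_reachable (hconn : G.Connected) (hcard : esize G = Fintype.card V)
    (hl : 3 ≤ l) (hinj : Injective c) (hadj : ∀ i, G.Adj (c i) (c (i + 1))) {i : Fin l} {x : V}
    (hx : (G.deleteEdges (cycleEdges c)).Reachable (c i) x) :
    G.dist x (c i) = distToSet G x (Set.range c) := by
  obtain ⟨σ, hσ⟩ := exists_isCycleSucc hconn hinj hadj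
  refine le_antisymm ?_ (distToSet_le_dist (Set.mem_range_self i))
  have hroot : c i = σ^[distToSet G x (Set.range c)] x := by
    simpa only [distToSet_eq_zero (Set.mem_range_self i), iterate_zero, id_eq] using
      hσ.iterate_distToSet_eq_of_reachable (hσ.isFunctionalGraph hl hinj hcard) hx
  conv_lhs => rw [hroot]
  exact dist_iterate_le hσ.adj _ x

theorem coverCost_add_card_mul_distToSet (hconn : G.Connected) (hcard : esize G = Fintype.card V)
    (hl : 3 ≤ l) (hinj : Injective c) (hadj : ∀ i, G.Adj (c i) (c (i + 1))) (x y : V) :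
    coverCost G x + Fintype.card V * distToSet G x (Set.range c)
      = coverCost G y + Fintype.card V * distToSet G y (Set.range c) := by
  obtain ⟨σ, hσ⟩ := exists_isCycleSucc hconn hinj hadj
  have hG := hσ.isFunctionalGraph hl hinj hcard
  have hharm : G.lapMatrix ℝ *ᵥ (coverCost G
      + (Fintype.card V : ℝ) • fun z ↦ (distToSet G z (Set.range c) : ℝ)) = 0 := by
    funext z
    rw [mulVec_add, mulVec_smul, Pi.add_apply, Pi.smul_apply, lapMatrix_mulVec_coverCost hconn,
      hσ.lapMatrix_mulVec_distToSet hG hinj, hcard, smul_eq_mul, Pi.zero_apply]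
    ring
  exact G.lapMatrix_mulVec_eq_zero_iff_forall_reachable.1 hharm x y (hconn x y)

end Unicyclic

/-- For an `n`-vertex unicyclic graph `G` with `x ∈ V(T_i)`,
`y ∈ V(T_j)`, one has `d(x,v_i) ≤ d(y,v_j)` iff `CC(x) ≥ CC(y)`. -/
theorem coverCost_monotone [Fintype V] (G : SimpleGraph V) (n l : ℕ) [NeZero l]
    (hn : Fintype.card V = n) (hconn : G.Connected) (huni : esize G = n)
    (hl : 3 ≤ l) (c : Fin l → V) (hinj : Function.Injective c)
    (hadj : ∀ i : Fin l, G.Adj (c i) (c (i + 1)))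
    (i j : Fin l) (x y : V)
    (hx : (G.deleteEdges (cycleEdges c)).Reachable (c i) x)
    (hy : (G.deleteEdges (cycleEdges c)).Reachable (c j) y) :
    G.dist x (c i) ≤ G.dist y (c j) ↔ coverCost G y ≤ coverCost G x := by
  subst hn
  have hconst := coverCost_add_card_mul_distToSet hconn huni hl hinj hadj x y
  have hcard : (0 : ℝ) < Fintype.card V := Nat.cast_pos.2 (Fintype.card_pos_iff.2 ⟨x⟩)
  rw [dist_eq_distToSet_of_reachable hconn huni hl hinj hadj hx,
    dist_eq_distToSet_of_reachable hconn huni hl hinj hadj hy,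
    ← Nat.cast_le (α := ℝ), ← mul_le_mul_iff_right₀ hcard]
  constructor <;> intro _ <;> linarith
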